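/- arXiv:2509.02173 — 6 statements merged into one kernel-verified Lean document; each statement's English description precedes it below -/
import Mathlib

section
/- Let G be a finite group and let (X, L, s, t) be a connected directed multigraph with a nonempty finite set X of sites and a finite set L of links, where s, t : L → X assign to each link its start and end site. Let g : X → G be an assignment of group elements to sites. Then the number of maps h : L → G satisfying g(s(l))·h(l) = h(l)·g(t(l)) for every link l ∈ L equals (|G|/|C|)^{|L|} if all the values g(x), x ∈ X, lie in a single conjugacy class C of G, and equals 0 otherwise. -/
/-- Connectivity of a directed multigraph with sites `X` and links `L`,
ignoring orientation. -/
def MultigraphConnected {X L : Type*} (s t : L → X) : Prop :=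
  ∀ a b : X, Relation.ReflTransGen
    (fun u v => ∃ l : L, (s l = u ∧ t l = v) ∨ (s l = v ∧ t l = u)) a b

theorem card_intertwiners_aux {G : Type*} [Group G] [Fintype G] (C : ConjClasses G) (a b : G)
    (ha : a ∈ C.carrier) (hb : b ∈ C.carrier) :
    (Nat.card {k : G // a * k = k * b} : ℚ) = (Fintype.card G : ℚ) / (Nat.card C.carrier : ℚ) := by
  classical
  rw [ConjClasses.mem_carrier_iff_mk_eq] at ha hb
  subst ha
  obtain ⟨c, rfl⟩ := isConj_iff.1 (ConjClasses.mk_eq_mk_iff_isConj.1 hb.symm)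
  have e : {k : G // a * k = k * (c * a * c⁻¹)} ≃ MulAction.stabilizer (ConjAct G) a :=
    { toFun := fun k => ⟨ConjAct.toConjAct (k.1 * c), by
        rw [MulAction.mem_stabilizer_iff, ConjAct.toConjAct_smul, mul_inv_eq_iff_eq_mul]
        have := k.2
        rw [← mul_assoc a, this]
        group⟩
      invFun := fun k => ⟨ConjAct.ofConjAct k.1 * c⁻¹, by
        have := k.2
        rw [MulAction.mem_stabilizer_iff, ConjAct.smul_def, mul_inv_eq_iff_eq_mul] at this
        rw [← mul_assoc, ← this]
        group⟩
      left_inv := fun k => by ext; simp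
      right_inv := fun k => by ext; simp }
  rw [Nat.card_congr e, ← ConjAct.orbit_eq_carrier_conjClasses]
  have h := MulAction.card_orbit_mul_card_stabilizer_eq_card_group (ConjAct G) a
  rw [← Nat.card_eq_fintype_card, ← Nat.card_eq_fintype_card, ConjAct.card] at h
  have : Nonempty (MulAction.orbit (ConjAct G) a) := ⟨⟨a, MulAction.mem_orbit_self a⟩⟩
  have h0 : (Nat.card (MulAction.orbit (ConjAct G) a) : ℚ) ≠ 0 :=
    Nat.cast_ne_zero.2 Nat.card_pos.ne'
  rw [eq_div_iff h0, ← h]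
  push_cast
  ring

/-- For a finite group `G`, a connected directed multigraph with nonempty finite site
set `X` and finite link set `L` (with start and end maps `s, t : L → X`), and an
assignment `g : X → G` of group elements to sites, the number of maps `h : L → G`
with `g (s l) * h l = h l * g (t l)` for every link `l` equals `(|G| / |C|) ^ |L|`
if all the values `g x` lie in a single conjugacy class `C`, and `0` otherwise. -/
theorem card_link_solutions_conjugacy
    {G X L : Type*} [Group G] [Fintype G] [Fintype X] [Nonempty X] [Fintype L]
    (s t : L → X) (hconn : MultigraphConnected s t) (g : X → G) :
    (∀ C : ConjClasses G, (∀ x : X, g x ∈ C.carrier) →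
      (Nat.card {h : L → G // ∀ l : L, g (s l) * h l = h l * g (t l)} : ℚ) =
        ((Fintype.card G : ℚ) / (Nat.card C.carrier : ℚ)) ^ (Fintype.card L)) ∧
    ((¬ ∃ C : ConjClasses G, ∀ x : X, g x ∈ C.carrier) →
      Nat.card {h : L → G // ∀ l : L, g (s l) * h l = h l * g (t l)} = 0) := by
  classical
  refine ⟨fun C hC => ?_, fun hno => ?_⟩
  · rw [Nat.card_congr (Equiv.subtypePiEquivPi (p := fun l (k : G) => g (s l) * k = k * g (t l))),
      Nat.card_pi]
    push_cast
    rw [← Finset.card_univ (α := L), ← Finset.prod_const]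
    refine Finset.prod_congr rfl fun l _ => ?_
    exact card_intertwiners_aux C _ _ (hC _) (hC _)
  · rw [Nat.card_eq_zero]
    left
    refine ⟨fun ⟨h, hh⟩ => hno ?_⟩
    obtain ⟨x₀⟩ := ‹Nonempty X›
    refine ⟨ConjClasses.mk (g x₀), fun x => ?_⟩
    rw [ConjClasses.mem_carrier_iff_mk_eq]
    have key : ∀ l, ConjClasses.mk (g (s l)) = ConjClasses.mk (g (t l)) := fun l => by
      rw [ConjClasses.mk_eq_mk_iff_isConj, isConj_iff]
      refine ⟨(h l)⁻¹, ?_⟩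
      rw [mul_assoc, inv_inv, hh l]
      group
    induction hconn x₀ x with
    | refl => rfl
    | tail _ hl ih =>
      obtain ⟨l, ⟨rfl, rfl⟩ | ⟨rfl, rfl⟩⟩ := hl
      · rw [← key, ih]
      · rw [key, ih]
end

section
/- Let G be a finite group, let (X, L, s, t) be a connected directed multigraph with V = |X| ≥ 1 sites and E = |L| links, and let U be a finite-dimensional complex representation of G on a space W with character χ_U. Consider the complex vector space H = ((L → G) → ℂ) ⊗ (⊗_{x ∈ X} W), where the first factor has orthonormal basis {|h⟩ : h : L → G}, with the representation of the product group ∏_{x ∈ X} G defined on basis vectors by (g_x)_{x} · (|h⟩ ⊗ (⊗_x w_x)) = |l ↦ g_{s(l)} h(l) g_{t(l)}⁻¹⟩ ⊗ (⊗_x U(g_x) w_x). Then the dimension of the subspace of vectors invariant under this representation satisfies dim H_phys = Σ_C (|G|/|C|)^{E−V} · χ_U(C)^V, where the sum runs over the conjugacy classes C of G, χ_U(C) is the character value on any element of C, and the integer power E−V ≥ −1 is interpreted in ℂ. -/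
open scoped TensorProduct

/-- The action of a gauge transformation `g : X → G` on a link configuration
`h : L → G`: on the link `l` it sends `h l` to `g (s l) * h l * (g (t l))⁻¹`. -/
def gaugeSmul {G X L : Type*} [Group G] (s t : L → X) (g : X → G) (h : L → G) :
    L → G :=
  fun l => g (s l) * h l * (g (t l))⁻¹

lemma gaugeSmul_mul {G X L : Type*} [Group G] (s t : L → X) (g g' : X → G)
    (h : L → G) : gaugeSmul s t g (gaugeSmul s t g' h) = gaugeSmul s t (g * g') h := by
  funext l
  simp [gaugeSmul, mul_assoc]

/-- The representation of the group of gauge transformations `X → G` on the link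
Hilbert space `(L → G) → ℂ`, sending the basis vector `|h⟩` (the delta function at `h`)
to `|gaugeSmul g h⟩`. -/
noncomputable def linkRep (G : Type*) [Group G] {X L : Type*} (s t : L → X) :
    Representation ℂ (X → G) ((L → G) → ℂ) where
  toFun g := LinearMap.funLeft ℂ ℂ (gaugeSmul s t g⁻¹)
  map_one' := by
    ext f h
    show f (gaugeSmul s t 1⁻¹ h) = f h
    congr 1
    funext l
    simp [gaugeSmul]
  map_mul' g g' := by
    ext f h
    show f (gaugeSmul s t (g * g')⁻¹ h) =
      f (gaugeSmul s t g'⁻¹ (gaugeSmul s t g⁻¹ h))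
    rw [gaugeSmul_mul, mul_inv_rev]

/-- The representation of the group of gauge transformations `X → G` on the matter
Hilbert space `⨂ₓ W`, given on site `x` by `U (g x)`. -/
noncomputable def matterRep {G X W : Type*} [Group G] [AddCommGroup W] [Module ℂ W]
    (U : Representation ℂ G W) :
    Representation ℂ (X → G) (⨂[ℂ] (_ : X), W) where
  toFun g := PiTensorProduct.map (fun x => U (g x))
  map_one' := by
    simp only [Pi.one_apply, map_one]
    exact PiTensorProduct.map_one
  map_mul' g g' := by
    simp only [Pi.mul_apply, map_mul]
    exact PiTensorProduct.map_mul _ _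


open Classical in
lemma mcf_card_same {G : Type*} [Group G] [Fintype G] (a a' b : G) (h : IsConj a a') :
    (Finset.univ.filter fun k : G => k * b * k⁻¹ = a).card =
      (Finset.univ.filter fun k : G => k * b * k⁻¹ = a').card := by
  obtain ⟨c, hc⟩ := isConj_iff.1 h
  refine Finset.card_bij (fun k _ => c * k) ?_ ?_ ?_
  · intro k hk
    simp only [Finset.mem_filter, Finset.mem_univ, true_and] at hk ⊢
    rw [← hc, ← hk]; group
  · intro k _ k' _ h
    exact mul_left_cancel h
  · intro k hk
    simp only [Finset.mem_filter, Finset.mem_univ, true_and] at hk ⊢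
    refine ⟨c⁻¹ * k, ?_, by group⟩
    have : c⁻¹ * (k * b * k⁻¹) * c = a := by rw [hk, ← hc]; group
    rw [← this]; group

open Classical in
lemma mcf_card_fiber {G : Type*} [Group G] [Fintype G] (a b : G) :
    ((Finset.univ.filter fun k : G => k * b * k⁻¹ = a).card : ℂ) =
      if ConjClasses.mk a = ConjClasses.mk b then
        (Fintype.card G : ℂ) / (Nat.card (ConjClasses.mk a).carrier : ℂ) else 0 := by
  split_ifs with h
  · have hne : (Nat.card (ConjClasses.mk a).carrier : ℂ) ≠ 0 := by
      have : Nonempty (ConjClasses.mk a).carrier := ⟨⟨a, ConjClasses.mem_carrier_mk⟩⟩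
      exact_mod_cast Nat.card_pos.ne'
    rw [eq_div_iff hne]
    have h1 : Fintype.card G =
        ∑ a' ∈ (Finset.univ.filter fun a' : G => a' ∈ (ConjClasses.mk a).carrier),
          (Finset.univ.filter fun k : G => k * b * k⁻¹ = a').card := by
      rw [← Finset.card_univ]
      refine Finset.card_eq_sum_card_fiberwise (f := fun k : G => k * b * k⁻¹) ?_
      intro k _
      simp only [Finset.coe_filter, Finset.mem_univ, true_and, Set.mem_setOf_eq,
        ConjClasses.mem_carrier_iff_mk_eq]
      rw [h, ConjClasses.mk_eq_mk_iff_isConj]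
      exact (isConj_iff.2 ⟨k, rfl⟩).symm
    rw [Finset.sum_congr rfl (g := fun _ =>
      (Finset.univ.filter fun k : G => k * b * k⁻¹ = a).card)] at h1
    · rw [Finset.sum_const, smul_eq_mul] at h1
      have h2 : Nat.card (ConjClasses.mk a).carrier =
          (Finset.univ.filter fun a' : G => a' ∈ (ConjClasses.mk a).carrier).card := by
        rw [Nat.card_eq_fintype_card, Fintype.card_subtype]
      rw [h1, h2]; push_cast; ring
    · intro x hx
      simp only [Finset.mem_filter, Finset.mem_univ, true_and,
        ConjClasses.mem_carrier_iff_mk_eq, ConjClasses.mk_eq_mk_iff_isConj] at hx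
      exact mcf_card_same _ _ _ hx
  · rw [Nat.cast_eq_zero, Finset.card_eq_zero, Finset.filter_eq_empty_iff]
    intro k _ hk
    exact h (ConjClasses.mk_eq_mk_iff_isConj.2 (isConj_iff.2 ⟨k, hk⟩).symm)

lemma mcf_trace_link_aux {α : Type*} [Fintype α] [DecidableEq α] (f : α → α) :
    LinearMap.trace ℂ (α → ℂ) (LinearMap.funLeft ℂ ℂ f) =
      ((Finset.univ.filter fun h => f h = h).card : ℂ) := by
  rw [LinearMap.trace_eq_matrix_trace ℂ (Pi.basisFun ℂ α), Matrix.trace]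
  simp [LinearMap.toMatrix_apply, LinearMap.funLeft_apply, Pi.single_apply]

open Classical in
lemma mcf_trace_link {G X L : Type*} [Group G] [Fintype G] [Fintype L]
    (s t : L → X) (g : X → G) :
    LinearMap.trace ℂ _ (linkRep G s t g) =
      ∏ l, if ConjClasses.mk (g (s l)) = ConjClasses.mk (g (t l)) then
        (Fintype.card G : ℂ) / (Nat.card (ConjClasses.mk (g (s l))).carrier : ℂ) else 0 := by
  have : linkRep G s t g = LinearMap.funLeft ℂ ℂ (gaugeSmul s t g⁻¹) := rfl
  rw [this, mcf_trace_link_aux]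
  simp_rw [← mcf_card_fiber]
  rw [← Nat.cast_prod, ← Fintype.card_piFinset]
  congr 2
  ext h
  simp only [Finset.mem_filter, Finset.mem_univ, true_and, Fintype.mem_piFinset, funext_iff,
    gaugeSmul, Pi.inv_apply, inv_inv]
  refine forall_congr' fun l => ?_
  rw [mul_inv_eq_iff_eq_mul, mul_assoc, inv_mul_eq_iff_eq_mul]

lemma mcf_trace_matter {G X W : Type*} [Group G] [Fintype X] [AddCommGroup W] [Module ℂ W]
    [FiniteDimensional ℂ W] (U : Representation ℂ G W) (g : X → G) :
    LinearMap.trace ℂ _ (matterRep (X := X) U g) =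
      ∏ x, LinearMap.trace ℂ W (U (g x)) := by
  classical
  have : matterRep (X := X) U g = PiTensorProduct.map (fun x => U (g x)) := rfl
  let b := Module.finBasis ℂ W
  rw [this, LinearMap.trace_eq_matrix_trace ℂ (Basis.piTensorProduct fun _ : X => b), Matrix.trace]
  simp_rw [LinearMap.trace_eq_matrix_trace ℂ b, Matrix.trace]
  rw [Finset.prod_univ_sum, Fintype.piFinset_univ]
  refine Finset.sum_congr rfl fun p _ => ?_
  simp [LinearMap.toMatrix_apply, Basis.piTensorProduct_apply, PiTensorProduct.map_tprod]

lemma mcf_trace_conj {G W : Type*} [Group G] [AddCommGroup W] [Module ℂ W]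
    (U : Representation ℂ G W) {a b : G} (h : ConjClasses.mk a = ConjClasses.mk b) :
    LinearMap.trace ℂ W (U a) = LinearMap.trace ℂ W (U b) := by
  obtain ⟨c, rfl⟩ := isConj_iff.1 (ConjClasses.mk_eq_mk_iff_isConj.1 h)
  exact (Representation.char_conj U a c).symm

open Classical in
lemma mcf_pointwise {G X L W : Type*} [Group G] [Fintype G] [Fintype X] [Nonempty X] [Fintype L]
    [Fintype (ConjClasses G)]
    (s t : L → X) (hconn : MultigraphConnected s t) [AddCommGroup W] [Module ℂ W]
    (U : Representation ℂ G W) (g : X → G) :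
    (∏ l, if ConjClasses.mk (g (s l)) = ConjClasses.mk (g (t l)) then
        (Fintype.card G : ℂ) / (Nat.card (ConjClasses.mk (g (s l))).carrier : ℂ) else 0) *
      ∏ x, LinearMap.trace ℂ W (U (g x)) =
    ∑ C : ConjClasses G, ((Fintype.card G : ℂ) / (Nat.card C.carrier : ℂ)) ^ (Fintype.card L) *
      ∏ x, if ConjClasses.mk (g x) = C then
        LinearMap.trace ℂ W (U (Quotient.out C)) else 0 := by
  have hout : ∀ C : ConjClasses G, ConjClasses.mk (Quotient.out C) = C := fun C =>
    Quotient.out_eq C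
  by_cases hl : ∀ l, ConjClasses.mk (g (s l)) = ConjClasses.mk (g (t l))
  · have hall : ∀ a b, ConjClasses.mk (g a) = ConjClasses.mk (g b) := by
      intro a b
      induction hconn a b with
      | refl => rfl
      | tail _ h ih =>
        obtain ⟨l, ⟨rfl, rfl⟩ | ⟨rfl, rfl⟩⟩ := h
        · exact ih.trans (hl l)
        · exact ih.trans (hl l).symm
    obtain ⟨x0⟩ := ‹Nonempty X›
    rw [Finset.sum_eq_single (ConjClasses.mk (g x0))]
    · congr 1
      · rw [← Finset.card_univ (α := L), ← Finset.prod_const]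
        refine Finset.prod_congr rfl fun l _ => ?_
        rw [if_pos (hl l), hall (s l) x0]
      · refine Finset.prod_congr rfl fun x _ => ?_
        rw [if_pos (hall x x0)]
        apply mcf_trace_conj
        rw [hout, hall x x0]
    · intro C _ hC
      rw [Finset.prod_eq_zero (Finset.mem_univ x0), mul_zero]
      rw [if_neg (Ne.symm hC)]
    · simp
  · push Not at hl
    obtain ⟨l, hl⟩ := hl
    rw [Finset.prod_eq_zero (Finset.mem_univ l) (if_neg hl), zero_mul]
    symm
    refine Finset.sum_eq_zero fun C _ => ?_
    by_cases h1 : ConjClasses.mk (g (s l)) = C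
    · rw [Finset.prod_eq_zero (Finset.mem_univ (t l)), mul_zero]
      rw [if_neg]; rintro rfl; exact hl h1
    · rw [Finset.prod_eq_zero (Finset.mem_univ (s l)) (if_neg h1), mul_zero]

open Classical in
lemma mcf_main
    {G X L : Type*} [Group G] [Fintype G] [Fintype (ConjClasses G)]
    [Fintype X] [Nonempty X] [Fintype L]
    (s t : L → X) (hconn : MultigraphConnected s t)
    {W : Type*} [AddCommGroup W] [Module ℂ W] [FiniteDimensional ℂ W]
    (U : Representation ℂ G W) :
    (Module.finrank ℂ ((linkRep G s t).tprod (matterRep (X := X) U)).invariants : ℂ) =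
      ∑ C : ConjClasses G,
        ((Fintype.card G : ℂ) / (Nat.card C.carrier : ℂ)) ^
            ((Fintype.card L : ℤ) - (Fintype.card X : ℤ)) *
          (LinearMap.trace ℂ W (U (Quotient.out C))) ^ (Fintype.card X) := by
  have : Module.Finite ℂ (⨂[ℂ] (_ : X), W) :=
    Module.Finite.of_basis (Basis.piTensorProduct fun _ : X => Module.finBasis ℂ W)
  have : Module.Free ℂ (⨂[ℂ] (_ : X), W) :=
    Module.Free.of_basis (Basis.piTensorProduct fun _ : X => Module.finBasis ℂ W)
  have : Invertible (Nat.card (X → G) : ℂ) :=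
    invertibleOfNonzero (by exact_mod_cast Nat.card_pos.ne')
  rw [← Representation.card_inv_mul_sum_char_eq_finrank]
  have hF : ∀ g : X → G, ((linkRep G s t).tprod (matterRep (X := X) U)).character g =
      ∑ C : ConjClasses G, ((Fintype.card G : ℂ) / (Nat.card C.carrier : ℂ)) ^ (Fintype.card L) *
      ∏ x, if ConjClasses.mk (g x) = C then
        LinearMap.trace ℂ W (U (Quotient.out C)) else 0 := by
    intro g
    have hp := mcf_pointwise s t hconn U g
    rw [← mcf_trace_link, ← mcf_trace_matter, ← LinearMap.trace_tensorProduct'] at hp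
    exact Eq.trans rfl hp
  simp_rw [hF]
  rw [Finset.sum_comm, Finset.mul_sum]
  refine Finset.sum_congr rfl fun C _ => ?_
  rw [← Finset.mul_sum]
  have h3 : ∑ g : X → G, ∏ x, (if ConjClasses.mk (g x) = C then
        LinearMap.trace ℂ W (U (Quotient.out C)) else 0) =
      ((Nat.card C.carrier : ℂ) * LinearMap.trace ℂ W (U (Quotient.out C))) ^ Fintype.card X := by
    have h4 : ∑ a : G, (if ConjClasses.mk a = C then
        LinearMap.trace ℂ W (U (Quotient.out C)) else 0) =
        (Nat.card C.carrier : ℂ) * LinearMap.trace ℂ W (U (Quotient.out C)) := by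
      rw [← Finset.sum_filter, Finset.sum_const, nsmul_eq_mul]
      congr 2
      rw [Nat.card_eq_fintype_card, Fintype.card_subtype]
      congr 1
      ext a
      simp [ConjClasses.mem_carrier_iff_mk_eq]
    rw [← h4, ← Finset.card_univ (α := X), ← Finset.prod_const, Finset.prod_univ_sum,
      Fintype.piFinset_univ]
  rw [h3]
  have hG : (Fintype.card G : ℂ) ≠ 0 := by exact_mod_cast Fintype.card_ne_zero
  have hC : (Nat.card C.carrier : ℂ) ≠ 0 := by
    have : Nonempty C.carrier := by
      obtain ⟨a, rfl⟩ := ConjClasses.exists_rep C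
      exact ⟨⟨a, ConjClasses.mem_carrier_mk⟩⟩
    exact_mod_cast Nat.card_pos.ne'
  rw [zpow_sub₀ (div_ne_zero hG hC), zpow_natCast, zpow_natCast, mul_pow,
    Nat.card_eq_fintype_card, Fintype.card_fun, Nat.cast_pow, div_pow _ _ (Fintype.card X)]
  field_simp

/-- **Master counting formula.** -/
theorem master_counting_formula
    {G X L : Type*} [Group G] [Fintype G] [DecidableEq G]
    [Fintype X] [Nonempty X] [Fintype L]
    (s t : L → X) (hconn : MultigraphConnected s t)
    {W : Type*} [AddCommGroup W] [Module ℂ W] [FiniteDimensional ℂ W]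
    (U : Representation ℂ G W) :
    (Module.finrank ℂ ((linkRep G s t).tprod (matterRep (X := X) U)).invariants : ℂ) =
      ∑ C : ConjClasses G,
        ((Fintype.card G : ℂ) / (Nat.card C.carrier : ℂ)) ^
            ((Fintype.card L : ℤ) - (Fintype.card X : ℤ)) *
          (LinearMap.trace ℂ W (U (Quotient.out C))) ^ (Fintype.card X) := by
  exact mcf_main s t hconn U
end

section
/- Let G be a finite group, let (X, L, s, t) be a connected directed multigraph with V = |X| ≥ 1 sites and E = |L| links, and for each site x let U_x be a finite-dimensional complex representation of G on a space W_x with character χ_{U_x}. Consider the space H = ((L → G) → ℂ) ⊗ (⊗_{x ∈ X} W_x) with the representation of ∏_{x ∈ X} G acting on basis vectors by (g_x)_x · (|h⟩ ⊗ (⊗_x w_x)) = |l ↦ g_{s(l)} h(l) g_{t(l)}⁻¹⟩ ⊗ (⊗_x U_x(g_x) w_x). Then the dimension of the invariant subspace equals Σ_C (|G|/|C|)^{E−V} · ∏_{x ∈ X} χ_{U_x}(C), the sum running over the conjugacy classes C of G. -/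
open scoped TensorProduct

/-- The representation of the group of gauge transformations `X → G` on the matter
Hilbert space `⨂ₓ Wₓ`, given on site `x` by `Uₓ (g x)`. -/
noncomputable def matterRepFamily {G X : Type*} [Group G] {W : X → Type*}
    [∀ x, AddCommGroup (W x)] [∀ x, Module ℂ (W x)]
    (U : ∀ x, Representation ℂ G (W x)) :
    Representation ℂ (X → G) (⨂[ℂ] x : X, W x) where
  toFun g := PiTensorProduct.map (fun x => U x (g x))
  map_one' := by
    simp only [Pi.one_apply, map_one]
    exact PiTensorProduct.map_one
  map_mul' g g' := by
    simp only [Pi.mul_apply, map_mul]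
    exact PiTensorProduct.map_mul _ _


lemma aux_trace_pi {X : Type*} [Fintype X] {W : X → Type*}
    [∀ x, AddCommGroup (W x)] [∀ x, Module ℂ (W x)]
    [∀ x, FiniteDimensional ℂ (W x)] (f : ∀ x, W x →ₗ[ℂ] W x) :
    LinearMap.trace ℂ (⨂[ℂ] x : X, W x) (PiTensorProduct.map f) =
      ∏ x, LinearMap.trace ℂ (W x) (f x) := by
  classical
  let b := fun x => Module.finBasis ℂ (W x)
  rw [LinearMap.trace_eq_matrix_trace ℂ (Basis.piTensorProduct b)]
  simp_rw [fun x => LinearMap.trace_eq_matrix_trace ℂ (b x) (f x)]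
  simp only [Matrix.trace, Matrix.diag, LinearMap.toMatrix_apply]
  rw [Finset.prod_univ_sum, Fintype.piFinset_univ]
  refine Finset.sum_congr rfl fun p _ => ?_
  rw [Basis.piTensorProduct_apply, PiTensorProduct.map_tprod,
    Basis.piTensorProduct_repr_tprod_apply]

lemma aux_count {G : Type*} [Group G] [Fintype G] [DecidableEq G] (a b : G) :
    (∑ k : G, if a⁻¹ * k * b = k then (1 : ℂ) else 0) =
      if ConjClasses.mk a = ConjClasses.mk b then
        (Fintype.card G : ℂ) / (Nat.card (ConjClasses.mk a).carrier : ℂ) else 0 := by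
  classical
  split_ifs with h
  · have h' := h
    rw [ConjClasses.mk_eq_mk_iff_isConj, isConj_comm, isConj_iff] at h
    obtain ⟨c, rfl⟩ := h
    have e : {k : G // (c * b * c⁻¹)⁻¹ * k * b = k} ≃ MulAction.stabilizer (ConjAct G) b :=
      { toFun := fun k => ⟨ConjAct.toConjAct (c⁻¹ * k.1), by
          have := k.2
          rw [MulAction.mem_stabilizer_iff, ConjAct.toConjAct_smul]
          generalize k.1 = k at this
          have h2 : k * b = c * b * c⁻¹ * k := by
            conv_rhs => rw [← this]
            group
          calc c⁻¹ * k * b * (c⁻¹ * k)⁻¹ = c⁻¹ * (k * b) * (k⁻¹ * c) := by group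
            _ = b := by rw [h2]; group⟩
        invFun := fun k => ⟨c * ConjAct.ofConjAct k.1, by
          have := k.2
          rw [MulAction.mem_stabilizer_iff, ConjAct.smul_def] at this
          generalize ConjAct.ofConjAct k.1 = k at this
          have h2 : k * b = b * k := by
            conv_rhs => rw [← this]
            group
          calc (c * b * c⁻¹)⁻¹ * (c * k) * b = c * b⁻¹ * (k * b) := by group
            _ = c * k := by rw [h2]; group⟩
        left_inv := fun k => by ext; simp
        right_inv := fun k => by ext; simp }
    rw [h']
    have h3 := MulAction.card_orbit_mul_card_stabilizer_eq_card_group (ConjAct G) b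
    rw [Finset.sum_boole, ← Fintype.card_subtype, Fintype.card_congr e]
    have h4 : Nat.card (ConjClasses.mk b).carrier =
        Fintype.card (MulAction.orbit (ConjAct G) b) := by
      rw [Nat.card_eq_fintype_card]
      exact Fintype.card_congr (Equiv.setCongr (ConjAct.orbit_eq_carrier_conjClasses b).symm)
    have h5 : Fintype.card (ConjAct G) = Fintype.card G := rfl
    have h6 : Fintype.card (MulAction.orbit (ConjAct G) b) ≠ 0 := by
      have : Nonempty (MulAction.orbit (ConjAct G) b) := ⟨⟨b, MulAction.mem_orbit_self b⟩⟩
      exact Fintype.card_ne_zero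
    rw [h4, ← h5, ← h3, eq_div_iff (by exact_mod_cast h6)]
    push_cast
    ring
  · refine Finset.sum_eq_zero fun k _ => if_neg fun hk => h ?_
    rw [ConjClasses.mk_eq_mk_iff_isConj, isConj_comm, isConj_iff]
    refine ⟨k, ?_⟩
    have h2 : k * b = a * k := by
      conv_rhs => rw [← hk]
      group
    rw [h2]; group

lemma aux_trace_link {G X L : Type*} [Group G] [Fintype G] [DecidableEq G] [Fintype L]
    (s t : L → X) (g : X → G) :
    LinearMap.trace ℂ ((L → G) → ℂ) (linkRep G s t g) =
      ∏ l, ∑ k : G, if (g (s l))⁻¹ * k * g (t l) = k then (1 : ℂ) else 0 := by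
  classical
  rw [LinearMap.trace_eq_matrix_trace ℂ (Pi.basisFun ℂ (L → G))]
  simp only [Matrix.trace, Matrix.diag, LinearMap.toMatrix_apply]
  rw [Finset.prod_univ_sum, Fintype.piFinset_univ]
  refine Finset.sum_congr rfl fun h _ => ?_
  rw [Pi.basisFun_repr, Pi.basisFun_apply]
  change (Pi.single h (1 : ℂ) : (L → G) → ℂ) (gaugeSmul s t g⁻¹ h) = _
  rw [Fintype.prod_ite_zero, Pi.single_apply]
  simp [gaugeSmul, funext_iff]

lemma aux_conn {G X L : Type*} [Group G] [Fintype G] [DecidableEq G]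
    [Fintype X] [Nonempty X] [Fintype L]
    (s t : L → X) (hconn : MultigraphConnected s t) (z : ConjClasses G → ℂ) (g : X → G) :
    (∏ l, if ConjClasses.mk (g (s l)) = ConjClasses.mk (g (t l)) then
        z (ConjClasses.mk (g (s l))) else 0) =
      ∑ C : ConjClasses G, z C ^ Fintype.card L *
        ∏ x, if ConjClasses.mk (g x) = C then (1 : ℂ) else 0 := by
  classical
  obtain ⟨x0⟩ := ‹Nonempty X›
  by_cases h : ∀ l, ConjClasses.mk (g (s l)) = ConjClasses.mk (g (t l))
  · have key : ∀ x, ConjClasses.mk (g x) = ConjClasses.mk (g x0) := by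
      intro x
      induction hconn x0 x with
      | refl => rfl
      | tail _ hl ih =>
        obtain ⟨l, ⟨h1, h2⟩ | ⟨h1, h2⟩⟩ := hl
        · rw [← ih, ← h1, ← h2, h l]
        · rw [← ih, ← h1, ← h2, h l]
    rw [Finset.sum_eq_single (ConjClasses.mk (g x0))]
    · simp [key]
    · intro C _ hC
      rw [Finset.prod_eq_zero (Finset.mem_univ x0) (if_neg hC.symm), mul_zero]
    · simp
  · push Not at h
    obtain ⟨l, hl⟩ := h
    rw [Finset.prod_eq_zero (Finset.mem_univ l) (if_neg hl), Finset.sum_eq_zero]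
    intro C _
    by_cases hs : ConjClasses.mk (g (s l)) = C
    · rw [Finset.prod_eq_zero (Finset.mem_univ (t l)) (if_neg (hs ▸ hl.symm)), mul_zero]
    · rw [Finset.prod_eq_zero (Finset.mem_univ (s l)) (if_neg hs), mul_zero]

/-- **Master counting formula with site-dependent matter representations.** -/
theorem master_counting_formula_site_dependent
    {G X L : Type*} [Group G] [Fintype G] [DecidableEq G]
    [Fintype X] [Nonempty X] [Fintype L]
    (s t : L → X) (hconn : MultigraphConnected s t)
    {W : X → Type*} [∀ x, AddCommGroup (W x)] [∀ x, Module ℂ (W x)]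
    [∀ x, FiniteDimensional ℂ (W x)]
    (U : ∀ x, Representation ℂ G (W x)) :
    (Module.finrank ℂ ((linkRep G s t).tprod (matterRepFamily U)).invariants : ℂ) =
      ∑ C : ConjClasses G,
        ((Fintype.card G : ℂ) / (Nat.card C.carrier : ℂ)) ^
            ((Fintype.card L : ℤ) - (Fintype.card X : ℤ)) *
          ∏ x : X, LinearMap.trace ℂ (W x) (U x (Quotient.out C)) := by
  classical
  have : FiniteDimensional ℂ (⨂[ℂ] x : X, W x) :=
    Module.Finite.of_basis (Basis.piTensorProduct fun x => Module.finBasis ℂ (W x))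
  have hG0 : (Fintype.card G : ℂ) ≠ 0 := by exact_mod_cast Fintype.card_ne_zero
  have hne : (Nat.card (X → G) : ℂ) ≠ 0 := by exact_mod_cast Nat.card_pos.ne'
  have : Invertible (Nat.card (X → G) : ℂ) := invertibleOfNonzero hne
  rw [← Representation.card_inv_mul_sum_char_eq_finrank, Representation.char_tensor]
  have hlink : ∀ g, (linkRep G s t).character g = ∑ C : ConjClasses G,
      ((Fintype.card G : ℂ) / (Nat.card C.carrier : ℂ)) ^ Fintype.card L *
        ∏ x, if ConjClasses.mk (g x) = C then (1 : ℂ) else 0 := by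
    intro g
    rw [← aux_conn s t hconn (fun C => (Fintype.card G : ℂ) / (Nat.card C.carrier : ℂ))]
    rw [Representation.character, aux_trace_link]
    simp_rw [aux_count]
  have hmat : ∀ g, (matterRepFamily U).character g =
      ∏ x, LinearMap.trace ℂ (W x) (U x (g x)) := fun g => aux_trace_pi _
  have hcl : ∀ x (a : G) (C : ConjClasses G), ConjClasses.mk a = C →
      LinearMap.trace ℂ (W x) (U x a) = LinearMap.trace ℂ (W x) (U x (Quotient.out C)) := by
    intro x a C h
    have h2 : ConjClasses.mk (Quotient.out C) = ConjClasses.mk a := by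
      rw [h]; exact Quotient.out_eq C
    rw [ConjClasses.mk_eq_mk_iff_isConj, isConj_iff] at h2
    obtain ⟨c, rfl⟩ := h2
    exact (U x).char_conj _ _
  simp_rw [Pi.mul_apply, hlink, hmat, Finset.sum_mul]
  rw [Finset.sum_comm, Finset.mul_sum]
  refine Finset.sum_congr rfl fun C _ => ?_
  have hC0 : (Nat.card C.carrier : ℂ) ≠ 0 := by
    have : Nonempty C.carrier := by
      obtain ⟨a, rfl⟩ := ConjClasses.exists_rep C
      exact ⟨⟨a, ConjClasses.mem_carrier_mk⟩⟩
    exact_mod_cast Nat.card_pos.ne'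
  have hsum : ∑ g : X → G, (∏ x, if ConjClasses.mk (g x) = C then (1 : ℂ) else 0) *
        ∏ x, LinearMap.trace ℂ (W x) (U x (g x)) =
      (Nat.card C.carrier : ℂ) ^ Fintype.card X *
        ∏ x, LinearMap.trace ℂ (W x) (U x (Quotient.out C)) := by
    simp_rw [← Finset.prod_mul_distrib]
    have := Finset.prod_univ_sum (fun _ : X => (Finset.univ : Finset G))
      (fun x a => (if ConjClasses.mk a = C then (1 : ℂ) else 0) *
        LinearMap.trace ℂ (W x) (U x a))
    rw [Fintype.piFinset_univ] at this
    rw [← this]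
    have h1 : ∀ x, (∑ a : G, (if ConjClasses.mk a = C then (1 : ℂ) else 0) *
        LinearMap.trace ℂ (W x) (U x a)) =
        (Nat.card C.carrier : ℂ) * LinearMap.trace ℂ (W x) (U x (Quotient.out C)) := by
      intro x
      have h2 : (Nat.card C.carrier : ℂ) =
          ∑ a : G, if ConjClasses.mk a = C then (1 : ℂ) else 0 := by
        rw [Finset.sum_boole, ← Fintype.card_subtype, Nat.card_eq_fintype_card]
        congr 1
        exact Fintype.card_congr (Equiv.subtypeEquivRight fun a => ConjClasses.mem_carrier_iff_mk_eq)
      rw [h2, Finset.sum_mul]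
      refine Finset.sum_congr rfl fun a _ => ?_
      split_ifs with h
      · rw [hcl x a C h]
      · simp
    simp_rw [h1]
    rw [Finset.prod_mul_distrib, Finset.prod_const, Finset.card_univ]
  simp_rw [mul_assoc]
  rw [← Finset.mul_sum, hsum, zpow_sub₀ (div_ne_zero hG0 hC0), zpow_natCast, zpow_natCast]
  rw [Nat.card_eq_fintype_card, Fintype.card_fun]
  push_cast
  rw [div_pow _ _ (Fintype.card X)]
  field_simp
end

section
/- Let G be a finite group, let (X, L, s, t) be a directed multigraph with V = |X| ≥ 1 sites and E = |L| links, let B ⊆ L be a set of boundary links such that the graph obtained by deleting the links in B is still connected, and let φ : G → G be a group homomorphism. Let U be a finite-dimensional complex representation of G with character χ_U. Consider the representation of ∏_{x ∈ X} G on H = ((L → G) → ℂ) ⊗ (⊗_{x ∈ X} W) acting on basis vectors by sending h(l) to g_{s(l)} h(l) g_{t(l)}⁻¹ for l ∉ B and to g_{s(l)} h(l) φ(g_{t(l)})⁻¹ for l ∈ B, and acting by U(g_x) on the matter factor at each site x. Let ∂X = {t(l) : l ∈ B}. Then the dimension of the invariant subspace equals Σ_C (|G|/|C|)^{E−V} ·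 χ_U(C)^V · α(C)^{|∂X|}, the sum running over the conjugacy classes C of G, where α(C) = |{g ∈ C : φ(g) ∈ C}| / |C|. -/
open scoped TensorProduct

/-- Connectivity of the directed multigraph with sites `X` and links `L` obtained by
deleting the links in `B`, ignoring orientation. -/
def MultigraphConnectedOff {X L : Type*} (s t : L → X) (B : Finset L)
    [DecidableEq L] : Prop :=
  ∀ a b : X, Relation.ReflTransGen
    (fun u v => ∃ l : L, l ∉ B ∧ ((s l = u ∧ t l = v) ∨ (s l = v ∧ t l = u))) a b

/-- The twisted action of a gauge transformation `g : X → G` on a link configuration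
`h : L → G`: on a bulk link `l ∉ B` it sends `h l` to `g (s l) * h l * (g (t l))⁻¹`,
while on a boundary link `l ∈ B` it sends `h l` to `g (s l) * h l * (φ (g (t l)))⁻¹`. -/
def gaugeSmulTw {G X L : Type*} [Group G] [DecidableEq L] (s t : L → X)
    (B : Finset L) (φ : G →* G) (g : X → G) (h : L → G) : L → G :=
  fun l => g (s l) * h l * (if l ∈ B then φ (g (t l)) else g (t l))⁻¹

lemma gaugeSmulTw_mul {G X L : Type*} [Group G] [DecidableEq L] (s t : L → X)
    (B : Finset L) (φ : G →* G) (g g' : X → G) (h : L → G) :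
    gaugeSmulTw s t B φ g (gaugeSmulTw s t B φ g' h) =
      gaugeSmulTw s t B φ (g * g') h := by
  funext l
  by_cases hl : l ∈ B <;> simp [gaugeSmulTw, hl, mul_assoc]

/-- The representation of the group of gauge transformations `X → G` on the link
Hilbert space `(L → G) → ℂ` with twisted boundary conditions, sending the basis vector
`|h⟩` (the delta function at `h`) to `|gaugeSmulTw g h⟩`. -/
noncomputable def linkRepTw (G : Type*) [Group G] {X L : Type*} [DecidableEq L]
    (s t : L → X) (B : Finset L) (φ : G →* G) :
    Representation ℂ (X → G) ((L → G) → ℂ) where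
  toFun g := LinearMap.funLeft ℂ ℂ (gaugeSmulTw s t B φ g⁻¹)
  map_one' := by
    ext f h
    show f (gaugeSmulTw s t B φ 1⁻¹ h) = f h
    congr 1
    funext l
    simp [gaugeSmulTw]
  map_mul' g g' := by
    ext f h
    show f (gaugeSmulTw s t B φ (g * g')⁻¹ h) =
      f (gaugeSmulTw s t B φ g'⁻¹ (gaugeSmulTw s t B φ g⁻¹ h))
    rw [gaugeSmulTw_mul, mul_inv_rev]

lemma cft_finrank {H V : Type*} [Group H] [Fintype H] [AddCommGroup V] [Module ℂ V]
    [FiniteDimensional ℂ V] (ρ : Representation ℂ H V) :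
    (Module.finrank ℂ ρ.invariants : ℂ) =
      (Fintype.card H : ℂ)⁻¹ * ∑ g : H, LinearMap.trace ℂ V (ρ g) := by
  have : Invertible (Fintype.card H : ℂ) :=
    invertibleOfNonzero (Nat.cast_ne_zero.mpr Fintype.card_ne_zero)
  rw [← (Representation.isProj_averageMap ρ).trace]
  simp [GroupAlgebra.average, Representation.averageMap, map_sum]

lemma cft_trace_pi {X W : Type*} [Fintype X] [AddCommGroup W] [Module ℂ W]
    [FiniteDimensional ℂ W] (f : X → W →ₗ[ℂ] W) :
    LinearMap.trace ℂ (⨂[ℂ] (_ : X), W) (PiTensorProduct.map f) =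
      ∏ x, LinearMap.trace ℂ W (f x) := by
  classical
  let b := Module.finBasis ℂ W
  rw [LinearMap.trace_eq_matrix_trace ℂ (Basis.piTensorProduct (fun _ : X => b))]
  simp_rw [LinearMap.trace_eq_matrix_trace ℂ b, Matrix.trace, Matrix.diag,
    LinearMap.toMatrix_apply]
  rw [Finset.prod_univ_sum, Fintype.piFinset_univ]
  simp

lemma cft_trace_funLeft {α : Type*} [Fintype α] [DecidableEq α] (f : α → α) :
    LinearMap.trace ℂ (α → ℂ) (LinearMap.funLeft ℂ ℂ f) =
      (Fintype.card {a // f a = a} : ℂ) := by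
  rw [LinearMap.trace_eq_matrix_trace ℂ (Pi.basisFun ℂ α)]
  simp [Matrix.trace, LinearMap.funLeft_apply, Pi.single_apply,
    Fintype.card_subtype]

lemma cft_card {G : Type*} [Group G] [Fintype G] [DecidableEq G] (a b : G) :
    (Fintype.card {h : G // h * b = a * h} : ℂ) =
      if ConjClasses.mk a = ConjClasses.mk b then
        (Fintype.card G : ℂ) / (Nat.card (ConjClasses.mk a).carrier : ℂ) else 0 := by
  split_ifs with hab
  · obtain ⟨c, hc⟩ := isConj_iff.1 (ConjClasses.mk_eq_mk_iff_isConj.1 hab)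
    have e : {h : G // h * b = a * h} ≃ MulAction.stabilizer (ConjAct G) a :=
      { toFun := fun h => ⟨ConjAct.toConjAct (h.1 * c), by
          obtain ⟨h, hh⟩ := h
          rw [MulAction.mem_stabilizer_iff, ConjAct.toConjAct_smul, mul_inv_eq_iff_eq_mul,
            ← mul_assoc]
          show h * c * a = a * h * c
          rw [← hh, ← hc]
          group⟩
        invFun := fun k => ⟨ConjAct.ofConjAct k.1 * c⁻¹, by
          obtain ⟨k, hk⟩ := k
          rw [MulAction.mem_stabilizer_iff, ConjAct.smul_def, mul_inv_eq_iff_eq_mul] at hk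
          show ConjAct.ofConjAct k * c⁻¹ * b = _
          rw [← mul_assoc, ← hk, ← hc]
          group⟩
        left_inv := fun h => by simp
        right_inv := fun k => by simp }
    have : Fintype (MulAction.orbit (ConjAct G) a) := Fintype.ofFinite _
    have : Fintype (MulAction.stabilizer (ConjAct G) a) := Fintype.ofFinite _
    have h1 := MulAction.card_orbit_mul_card_stabilizer_eq_card_group (ConjAct G) a
    have h2 : (MulAction.orbit (ConjAct G) a) = (ConjClasses.mk a).carrier := by
      rw [ConjAct.orbit_eq_carrier_conjClasses]
    rw [← Nat.card_eq_fintype_card, Nat.card_congr e]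
    simp only [← Nat.card_eq_fintype_card] at h1 ⊢
    rw [h2, Nat.card_congr (ConjAct.ofConjAct (G := G)).toEquiv] at h1
    rw [← h1]
    have : (Nat.card (ConjClasses.mk a).carrier : ℂ) ≠ 0 := by
      have : Nonempty (ConjClasses.mk a).carrier := ⟨⟨a, ConjClasses.mem_carrier_mk⟩⟩
      exact Nat.cast_ne_zero.mpr Nat.card_pos.ne'
    push_cast
    field_simp
  · rw [Nat.cast_eq_zero, Fintype.card_eq_zero_iff]
    refine ⟨fun h => hab ?_⟩
    rw [eq_comm, ConjClasses.mk_eq_mk_iff_isConj, isConj_iff]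
    exact ⟨h.1, by rw [h.2]; group⟩

lemma cft_mk_eq {G X L : Type*} [Group G] [DecidableEq L] (s t : L → X) (B : Finset L)
    (hconn : MultigraphConnectedOff s t B) (g : X → G)
    (hg : ∀ l, l ∉ B → ConjClasses.mk (g (s l)) = ConjClasses.mk (g (t l))) (a b : X) :
    ConjClasses.mk (g a) = ConjClasses.mk (g b) := by
  induction hconn a b with
  | refl => rfl
  | tail _ h ih =>
    obtain ⟨l, hl, (⟨rfl, rfl⟩ | ⟨rfl, rfl⟩)⟩ := h
    · exact ih.trans (hg l hl)
    · exact ih.trans (hg l hl).symm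

lemma cft_link {G X L : Type*} [Group G] [Fintype G] [DecidableEq G]
    [Fintype X] [Nonempty X] [DecidableEq X] [Fintype L] [DecidableEq L]
    (s t : L → X) (B : Finset L)
    (hconn : MultigraphConnectedOff s t B) (φ : G →* G) (g : X → G) [DecidableEq (ConjClasses G)] :
    LinearMap.trace ℂ _ (linkRepTw G s t B φ g) =
      ∑ C : ConjClasses G, ((Fintype.card G : ℂ) / (Nat.card C.carrier : ℂ)) ^ (Fintype.card L) *
        ∏ x, if ConjClasses.mk (g x) = C ∧ (x ∈ B.image t → ConjClasses.mk (φ (g x)) = C)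
          then 1 else 0 := by
  have h0 : LinearMap.trace ℂ _ (linkRepTw G s t B φ g) =
      ∏ l, (Fintype.card {h : G // h * (if l ∈ B then φ (g (t l)) else g (t l))
        = g (s l) * h} : ℂ) := by
    show LinearMap.trace ℂ _ (LinearMap.funLeft ℂ ℂ (gaugeSmulTw s t B φ g⁻¹)) = _
    rw [cft_trace_funLeft, ← Nat.cast_prod, ← Fintype.card_pi]
    congr 1
    refine Fintype.card_congr (Equiv.trans (Equiv.subtypeEquivRight (fun h => ?_))
      (Equiv.subtypePiEquivPi (p := fun l (h : G) =>
        h * (if l ∈ B then φ (g (t l)) else g (t l)) = g (s l) * h)))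
    rw [funext_iff]
    refine forall_congr' fun l => ?_
    simp only [gaugeSmulTw, Pi.inv_apply, map_inv]
    by_cases hl : l ∈ B <;> simp [hl, mul_assoc, inv_mul_eq_iff_eq_mul]
  rw [h0]
  simp_rw [cft_card]
  obtain ⟨x0⟩ := ‹Nonempty X›
  rw [Finset.sum_eq_single (ConjClasses.mk (g x0))]
  · by_cases hall : ∀ l, ConjClasses.mk (g (s l)) =
        ConjClasses.mk (if l ∈ B then φ (g (t l)) else g (t l))
    · have hc : ∀ a, ConjClasses.mk (g a) = ConjClasses.mk (g x0) := fun a =>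
        cft_mk_eq s t B hconn g (fun l hl => by simpa [hl] using hall l) a x0
      have hp : ∀ x, ConjClasses.mk (g x) = ConjClasses.mk (g x0) ∧
          (x ∈ B.image t → ConjClasses.mk (φ (g x)) = ConjClasses.mk (g x0)) := by
        refine fun x => ⟨hc x, fun hx => ?_⟩
        obtain ⟨l, hl, rfl⟩ := Finset.mem_image.1 hx
        rw [← hc (s l), hall l, if_pos hl]
      rw [Finset.prod_congr rfl (fun l _ => by rw [if_pos (hall l), hc (s l)]),
        Finset.prod_congr rfl (fun x _ => if_pos (hp x))]
      simp [div_pow]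
    · have hall' := hall
      push Not at hall
      obtain ⟨l, hl⟩ := hall
      rw [Finset.prod_eq_zero (Finset.mem_univ l) (if_neg hl)]
      by_contra hne
      apply hall'
      have hp : ∀ x, ConjClasses.mk (g x) = ConjClasses.mk (g x0) ∧
          (x ∈ B.image t → ConjClasses.mk (φ (g x)) = ConjClasses.mk (g x0)) := by
        intro x
        by_contra hx
        apply hne
        rw [Finset.prod_eq_zero (Finset.mem_univ x) (if_neg hx), mul_zero]
      intro l
      split_ifs with hlB
      · rw [(hp _).1, (hp (t l)).2 (Finset.mem_image_of_mem _ hlB)]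
      · rw [(hp _).1, (hp (t l)).1]
  · intro C _ hC
    rw [Finset.prod_eq_zero (Finset.mem_univ x0) (if_neg (fun h => hC h.1.symm)), mul_zero]
  · simp

lemma cft_chi {G W : Type*} [Group G] [AddCommGroup W] [Module ℂ W] [FiniteDimensional ℂ W]
    (U : Representation ℂ G W) (a : G) :
    LinearMap.trace ℂ W (U a) =
      LinearMap.trace ℂ W (U (Quotient.out (ConjClasses.mk a))) := by
  have h : ConjClasses.mk (Quotient.out (ConjClasses.mk a)) = ConjClasses.mk a :=
    Quotient.out_eq _
  obtain ⟨c, hc⟩ := isConj_iff.1 (ConjClasses.mk_eq_mk_iff_isConj.1 h)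
  conv_lhs => rw [← hc]
  rw [map_mul, LinearMap.trace_mul_comm, ← map_mul]
  congr 2
  group

/-- **Counting formula with boundary conditions twisted by a group homomorphism.** -/
theorem counting_formula_twisted
    {G X L : Type*} [Group G] [Fintype G] [DecidableEq G]
    [Fintype X] [Nonempty X] [DecidableEq X] [Fintype L] [DecidableEq L]
    (s t : L → X) (B : Finset L)
    (hconn : MultigraphConnectedOff s t B)
    (φ : G →* G)
    {W : Type*} [AddCommGroup W] [Module ℂ W] [FiniteDimensional ℂ W]
    (U : Representation ℂ G W) :
    (Module.finrank ℂ ((linkRepTw G s t B φ).tprod (matterRep (X := X) U)).invariants : ℂ) =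
      ∑ C : ConjClasses G,
        ((Fintype.card G : ℂ) / (Nat.card C.carrier : ℂ)) ^
            ((Fintype.card L : ℤ) - (Fintype.card X : ℤ)) *
          (LinearMap.trace ℂ W (U (Quotient.out C))) ^ (Fintype.card X) *
          ((Nat.card {g ∈ C.carrier | φ g ∈ C.carrier} : ℂ) /
              (Nat.card C.carrier : ℂ)) ^ (B.image t).card := by
  classical
  have htr : ∀ g : X → G, LinearMap.trace ℂ _
      (((linkRepTw G s t B φ).tprod (matterRep (X := X) U)) g) =
      ∑ C : ConjClasses G, ((Fintype.card G : ℂ) / (Nat.card C.carrier : ℂ)) ^ (Fintype.card L) *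
        ∏ x, (if ConjClasses.mk (g x) = C ∧ (x ∈ B.image t → ConjClasses.mk (φ (g x)) = C)
          then LinearMap.trace ℂ W (U (Quotient.out C)) else 0) := by
    intro g
    rw [Representation.tprod_apply]
    have hF : Module.Finite ℂ (⨂[ℂ] (_ : X), W) :=
      Module.Finite.of_basis (Basis.piTensorProduct (fun _ : X => Module.finBasis ℂ W))
    rw [LinearMap.trace_tensorProduct', cft_link s t B hconn]
    have : LinearMap.trace ℂ _ (matterRep (X := X) U g) = ∏ x, LinearMap.trace ℂ W (U (g x)) :=
      cft_trace_pi _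
    rw [this, Finset.sum_mul]
    refine Finset.sum_congr rfl fun C _ => ?_
    rw [mul_assoc, ← Finset.prod_mul_distrib]
    congr 1
    refine Finset.prod_congr rfl fun x _ => ?_
    rw [cft_chi U (g x)]
    split_ifs with h
    · rw [h.1, one_mul]
    · rw [zero_mul]
  have hF : Module.Finite ℂ (⨂[ℂ] (_ : X), W) :=
    Module.Finite.of_basis (Basis.piTensorProduct (fun _ : X => Module.finBasis ℂ W))
  rw [cft_finrank, Finset.sum_congr rfl (fun g _ => htr g), Finset.sum_comm, Finset.mul_sum]
  refine Finset.sum_congr rfl fun C _ => ?_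
  rw [← Finset.mul_sum]
  have hswap := Finset.prod_univ_sum (fun _ : X => (Finset.univ : Finset G))
    (fun x a => if ConjClasses.mk a = C ∧ (x ∈ B.image t → ConjClasses.mk (φ a) = C)
          then LinearMap.trace ℂ W (U (Quotient.out C)) else 0)
  rw [Fintype.piFinset_univ] at hswap
  rw [← hswap]
  have hc0 : (Nat.card C.carrier : ℂ) ≠ 0 := by
    obtain ⟨a, rfl⟩ := ConjClasses.exists_rep C
    have : Nonempty (ConjClasses.mk a).carrier := ⟨⟨a, ConjClasses.mem_carrier_mk⟩⟩
    exact Nat.cast_ne_zero.mpr Nat.card_pos.ne'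
  have hG : (Fintype.card G : ℂ) ≠ 0 := Nat.cast_ne_zero.mpr Fintype.card_ne_zero
  have hx : ∀ x : X, (∑ a : G, if ConjClasses.mk a = C ∧
      (x ∈ B.image t → ConjClasses.mk (φ a) = C)
          then LinearMap.trace ℂ W (U (Quotient.out C)) else 0) =
      (Nat.card C.carrier : ℂ) * LinearMap.trace ℂ W (U (Quotient.out C)) *
        (if x ∈ B.image t then ((Nat.card {g ∈ C.carrier | φ g ∈ C.carrier} : ℂ) /
              (Nat.card C.carrier : ℂ)) else 1) := by
    intro x
    rw [← Finset.sum_filter, Finset.sum_const, nsmul_eq_mul]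
    split_ifs with hxB
    · rw [mul_div_assoc', eq_div_iff hc0]
      have : (Finset.univ.filter fun a : G => ConjClasses.mk a = C ∧
          (x ∈ B.image t → ConjClasses.mk (φ a) = C)).card =
          Nat.card {g ∈ C.carrier | φ g ∈ C.carrier} := by
        rw [Nat.card_coe_set_eq, ← Set.ncard_coe_finset]
        congr 1
        ext a
        simp only [Finset.coe_filter, Finset.mem_univ, true_and, Set.mem_ofPred_eq, hxB,
          true_imp_iff, ConjClasses.mem_carrier_iff_mk_eq]
      rw [this]
      ring
    · have : (Finset.univ.filter fun a : G => ConjClasses.mk a = C ∧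
          (x ∈ B.image t → ConjClasses.mk (φ a) = C)).card = Nat.card C.carrier := by
        rw [Nat.card_coe_set_eq, ← Set.ncard_coe_finset]
        congr 1
        ext a
        simp only [Finset.coe_filter, Finset.mem_univ, true_and, Set.mem_ofPred_eq, hxB,
          false_imp_iff, and_true, ConjClasses.mem_carrier_iff_mk_eq]
      rw [this, mul_one]
  rw [Finset.prod_congr rfl (fun x _ => hx x), Finset.prod_mul_distrib, Finset.prod_const,
    Finset.prod_ite, Finset.prod_const_one, mul_one, Finset.prod_const, Finset.filter_mem_eq_inter,
    Finset.univ_inter, Finset.card_univ, zpow_sub₀ (div_ne_zero hG hc0), zpow_natCast,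
    zpow_natCast, Fintype.card_fun, mul_pow, div_pow _ _ (Fintype.card X)]
  push_cast
  field_simp
end

section
/- Let K be a field, let W be a K-vector space of finite dimension n, and let f : W → W be a linear endomorphism. For every scalar t ∈ K, det(id_W + t·f) = Σ_{k=0}^{n} tr(Λ^k f) · t^k, where Λ^k f denotes the induced endomorphism of the k-th exterior power Λ^k W. Equivalently, the trace of the induced map on the k-th exterior power equals the k-th elementary symmetric polynomial in the eigenvalues of f. -/
/-- The exterior algebra map induced by a linear endomorphism preserves the `k`-th
exterior power. -/
lemma map_mem_exteriorPower {K W : Type*} [CommRing K] [AddCommGroup W] [Module K W]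
    (f : W →ₗ[K] W) (k : ℕ) {x : ExteriorAlgebra K W} (hx : x ∈ ⋀[K]^k W) :
    ExteriorAlgebra.map f x ∈ ⋀[K]^k W := by
  rw [← ExteriorAlgebra.ιMulti_span_fixedDegree] at hx ⊢
  induction hx using Submodule.span_induction with
  | mem y hy =>
      obtain ⟨v, rfl⟩ := hy
      exact Submodule.subset_span ⟨f ∘ v, (ExteriorAlgebra.map_apply_ιMulti f v).symm⟩
  | zero => simp
  | add y z hy hz ihy ihz => simpa using Submodule.add_mem _ ihy ihz
  | smul c y hy ihy => simpa using Submodule.smul_mem _ c ihy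

/-- The endomorphism `Λ^k f` of the `k`-th exterior power `⋀[K]^k W` induced by a
linear endomorphism `f` of `W`, determined by
`(Λ^k f) (v₁ ∧ ⋯ ∧ v_k) = f v₁ ∧ ⋯ ∧ f v_k`. -/
noncomputable def exteriorPowerMap {K W : Type*} [CommRing K] [AddCommGroup W]
    [Module K W] (k : ℕ) (f : W →ₗ[K] W) : ⋀[K]^k W →ₗ[K] ⋀[K]^k W :=
  (ExteriorAlgebra.map f).toLinearMap.restrict
    (fun _ hx => map_mem_exteriorPower f k hx)

lemma exteriorPowerMap_ιMulti_aux {K W : Type*} [CommRing K] [AddCommGroup W] [Module K W]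
    (k : ℕ) (f : W →ₗ[K] W) (v : Fin k → W) :
    exteriorPowerMap k f (exteriorPower.ιMulti K k v) = exteriorPower.ιMulti K k (f ∘ v) := by
  apply Subtype.ext
  exact ExteriorAlgebra.map_apply_ιMulti f v

lemma trace_exteriorPowerMap_aux {K W : Type*} [CommRing K] [AddCommGroup W] [Module K W]
    {n : ℕ} (b : Module.Basis (Fin n) K W) (k : ℕ) (f : W →ₗ[K] W) :
    LinearMap.trace K (⋀[K]^k W) (exteriorPowerMap k f) =
      ∑ s ∈ Finset.univ.powersetCard k,
        ((LinearMap.toMatrix b b f).submatrix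
          (Subtype.val : s → Fin n) (Subtype.val : s → Fin n)).det := by
  classical
  rw [LinearMap.trace_eq_matrix_trace K (b.exteriorPower k), Matrix.trace]
  rw [Finset.sum_subtype (p := fun s => s ∈ Set.powersetCard (Fin n) k)
    (Finset.univ.powersetCard k) (by intro s; simp [Set.powersetCard])]
  refine Finset.sum_congr (by congr) fun s _ => ?_
  rw [Matrix.diag_apply, LinearMap.toMatrix_apply, exteriorPower.basis_repr_apply,
    exteriorPower.basis_apply, exteriorPower.ιMulti_family, exteriorPowerMap_ιMulti_aux,
    exteriorPower.ιMultiDual_apply_ιMulti, ← Matrix.det_transpose,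
    ← Matrix.det_submatrix_equiv_self (s.val.orderIsoOfFin s.prop).toEquiv]
  congr 1
  ext i j
  simp [LinearMap.toMatrix_apply, Set.powersetCard.ofFinEmbEquiv_symm_apply]
  rfl

/-- For a linear endomorphism `f` of an `n`-dimensional vector space `W` over a field
`K` and any scalar `t`, `det (id + t • f) = ∑_{k=0}^{n} tr (Λ^k f) * t ^ k`. -/
theorem det_one_add_smul_eq_sum_trace_exteriorPower
    {K : Type*} [Field K] {W : Type*} [AddCommGroup W] [Module K W]
    [FiniteDimensional K W] (f : W →ₗ[K] W) (t : K) :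
    LinearMap.det (LinearMap.id + t • f) =
      ∑ k ∈ Finset.range (Module.finrank K W + 1),
        LinearMap.trace K (⋀[K]^k W) (exteriorPowerMap k f) * t ^ k := by
  classical
  have b := Module.finBasis K W
  set M := LinearMap.toMatrix b b f with hM
  have h1 : LinearMap.det (LinearMap.id + t • f) =
      (Matrix.det (1 + (Polynomial.X : Polynomial K) • M.map Polynomial.C)).eval t := by
    rw [← LinearMap.det_toMatrix b, map_add, map_smul, LinearMap.toMatrix_id,
      ← Polynomial.coe_evalRingHom, RingHom.map_det]
    congr 1
    ext i j
    by_cases h : i = j <;> simp [h, hM] <;> exact mul_comm _ _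
  rw [h1, Polynomial.eval_eq_sum_range' (n := Module.finrank K W + 1)]
  · refine Finset.sum_congr rfl fun k _ => ?_
    rw [Matrix.coeff_det_one_add_X_smul_eq_sum_minors, trace_exteriorPowerMap_aux b]
  · rw [Nat.lt_succ_iff, Polynomial.natDegree_le_iff_coeff_eq_zero]
    intro k hk
    rw [Matrix.coeff_det_one_add_X_smul_eq_sum_minors, Finset.powersetCard_eq_empty.2 (by simpa)]
    simp
end

section
/- The binary tetrahedral group SL(2, F₃) (the special linear group of 2×2 matrices of determinant 1 over the field with 3 elements, a group of order 24) is quasi-ambivalent but not ambivalent. That is: (a) there exists an element g ∈ SL(2, F₃) that is not conjugate to g⁻¹; and (b) there exists a group automorphism τ of SL(2, F₃) with τ ∘ τ = id such that for every g ∈ SL(2, F₃), τ(g) is conjugate to g⁻¹. -/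
theorem aux_a : ∀ p q r s : ZMod 3, p * s - q * r = 1 →
    ¬ (p = p - r ∧ p + q = q - s) := by decide

set_option maxRecDepth 100000 in
theorem aux_b : ∀ a b c d : ZMod 3, a * d - b * c = 1 → ∃ p q r s : ZMod 3,
    p * s - q * r = 1 ∧ p * a - q * c = d * p - b * r ∧ -(p * b) + q * d = d * q - b * s ∧
    r * a - s * c = -(c * p) + a * r ∧ -(r * b) + s * d = -(c * q) + a * s := by decide

def mkSL (a b c d : ZMod 3) (h : a * d - b * c = 1) :
    Matrix.SpecialLinearGroup (Fin 2) (ZMod 3) :=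
  ⟨!![a, b; c, d], by rw [Matrix.det_fin_two_of]; exact h⟩

theorem mkSL_coe (a b c d : ZMod 3) (h : a * d - b * c = 1) :
    (mkSL a b c d h : Matrix (Fin 2) (Fin 2) (ZMod 3)) = !![a, b; c, d] := rfl

def tauFun (g : Matrix.SpecialLinearGroup (Fin 2) (ZMod 3)) :
    Matrix.SpecialLinearGroup (Fin 2) (ZMod 3) :=
  mkSL (g.1 0 0) (-g.1 0 1) (-g.1 1 0) (g.1 1 1) (by
    have h := g.2
    rw [Matrix.det_fin_two] at h
    linear_combination h)

theorem tauFun_tauFun (g : Matrix.SpecialLinearGroup (Fin 2) (ZMod 3)) :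
    tauFun (tauFun g) = g := by
  ext i j
  fin_cases i <;> fin_cases j <;> simp [tauFun, mkSL_coe]

def tauEquiv : Matrix.SpecialLinearGroup (Fin 2) (ZMod 3) ≃*
    Matrix.SpecialLinearGroup (Fin 2) (ZMod 3) where
  toFun := tauFun
  invFun := tauFun
  left_inv := tauFun_tauFun
  right_inv := tauFun_tauFun
  map_mul' g h := by
    ext i j
    fin_cases i <;> fin_cases j <;>
      simp [tauFun, mkSL_coe, Matrix.mul_apply, Fin.sum_univ_two] <;> ring

/-- **The binary tetrahedral group `SL(2, 𝔽₃)` is quasi-ambivalent but not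
ambivalent**: (a) some element is not conjugate to its own inverse, but (b) there is
an involutory class-inverting automorphism, i.e. a group automorphism `τ` with
`τ ∘ τ = id` such that `τ g` is conjugate to `g⁻¹` for every `g`. -/
theorem binaryTetrahedral_quasiambivalent_not_ambivalent :
    (∃ g : Matrix.SpecialLinearGroup (Fin 2) (ZMod 3), ¬ IsConj g g⁻¹) ∧
    (∃ τ : Matrix.SpecialLinearGroup (Fin 2) (ZMod 3) ≃*
        Matrix.SpecialLinearGroup (Fin 2) (ZMod 3),
      τ.trans τ = MulEquiv.refl _ ∧
      ∀ g : Matrix.SpecialLinearGroup (Fin 2) (ZMod 3), IsConj (τ g) g⁻¹) := by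
  refine ⟨⟨mkSL 1 1 0 1 (by simp), ?_⟩, tauEquiv, ?_, ?_⟩
  · intro h
    obtain ⟨x, hx⟩ := isConj_iff.mp h
    rw [mul_inv_eq_iff_eq_mul] at hx
    have hd := x.2
    rw [Matrix.det_fin_two] at hd
    have hm := congrArg Subtype.val hx
    have h0 := congrFun (congrFun hm 0) 0
    have h1 := congrFun (congrFun hm 0) 1
    simp [mkSL_coe, Matrix.mul_apply, Fin.sum_univ_two, Matrix.SpecialLinearGroup.coe_inv,
      Matrix.adjugate_fin_two] at h0 h1
    refine aux_a _ _ _ _ hd ⟨?_, ?_⟩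
    · linear_combination h0
    · linear_combination h1
  · ext1 g
    exact tauFun_tauFun g
  · intro g
    have hd := g.2
    rw [Matrix.det_fin_two] at hd
    obtain ⟨p, q, r, s, h, h1, h2, h3, h4⟩ := aux_b _ _ _ _ hd
    rw [isConj_iff]
    refine ⟨mkSL p q r s h, ?_⟩
    rw [mul_inv_eq_iff_eq_mul]
    change _ * tauFun g = _
    ext i j
    fin_cases i <;> fin_cases j <;>
      simp [tauFun, mkSL_coe, Matrix.mul_apply, Fin.sum_univ_two, Matrix.SpecialLinearGroup.coe_inv,
        Matrix.adjugate_fin_two]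
    · linear_combination h1
    · linear_combination h2
    · linear_combination h3
    · linear_combination h4
end
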